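/- arXiv:2508.18461 — 3 statements merged into one kernel-verified Lean document; each statement's English description precedes it below -/
import Mathlib

section
/- Let C be a strong divisibility sequence, let p be an ideal prime for C with parameter s = s(p), let n ≥ 0 have standard base-p representation n = n_ℓ ⋯ n_1 n_0, and let 0 ≤ r < α(p). Then T_{p,C}(α(p)·n + r, x) equals the matrix product [r+1, (α(p)−r−1)·x^{s−1}] · M_p(n_0) · M_p(n_1) ⋯ M_p(n_ℓ) · [1, 0]^T (a 1×1 matrix identified with a polynomial in ℤ[x]). -/
open Finset

/-- A strong divisibility sequence: nonzero integers `Cs 1, Cs 2, ...` with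
`gcd (Cs n) (Cs m) = |Cs (gcd n m)|`. -/
def IsStrongDivSeq (Cs : ℕ → ℤ) : Prop :=
  (∀ n, 1 ≤ n → Cs n ≠ 0) ∧
  ∀ m n, 1 ≤ m → 1 ≤ n → Int.gcd (Cs n) (Cs m) = (Cs (Nat.gcd n m)).natAbs

/-- `a` is the rank of apparition of `m` in the sequence `Cs`:
the least index `j ≥ 1` such that `m ∣ Cs j`. -/
def IsRank (Cs : ℕ → ℤ) (m a : ℕ) : Prop :=
  1 ≤ a ∧ (m : ℤ) ∣ Cs a ∧ ∀ j, 1 ≤ j → (m : ℤ) ∣ Cs j → a ≤ j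

/-- The `C`-orial: `0!_C = 1`, `n!_C = Cs 1 * Cs 2 * ⋯ * Cs n`. -/
def Corial (Cs : ℕ → ℤ) : ℕ → ℤ
  | 0 => 1
  | n + 1 => Corial Cs n * Cs (n + 1)

/-- `p` is an ideal prime for `Cs`, with `α k` the rank of apparition of `p ^ k`
and parameter `s = s(p)`. -/
def IdealPrime (Cs : ℕ → ℤ) (p : ℕ) (α : ℕ → ℕ) (s : ℕ) : Prop :=
  1 ≤ s ∧ (∀ k, 1 ≤ k → IsRank Cs (p ^ k) (α k)) ∧
  (∀ k, 1 ≤ k → k ≤ s → α k = α 1) ∧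
  (∀ k, s < k → α k = p ^ (k - s) * α 1)

/-- The `p`-adic valuation of the `C`-nomial coefficient `binom(n, m)_C`,
defined as `ν_p(n!_C) - ν_p(m!_C) - ν_p((n-m)!_C)` (an integer). -/
def nuCnomial (p : ℕ) (Cs : ℕ → ℤ) (n m : ℕ) : ℤ :=
  (padicValInt p (Corial Cs n) : ℤ) - (padicValInt p (Corial Cs m) : ℤ)
    - (padicValInt p (Corial Cs (n - m)) : ℤ)

/-- `T_{p,C}(n, x) = ∑_{m=0}^{n} x ^ ν_p(binom(n,m)_C)`, a polynomial in `ℤ[x]`. -/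
noncomputable def Tpoly (p : ℕ) (Cs : ℕ → ℤ) (n : ℕ) : Polynomial ℤ :=
  ∑ m ∈ Finset.range (n + 1), Polynomial.X ^ (nuCnomial p Cs n m).toNat

/-- Rowland's matrix `M_p(d)` with rows `(d+1, p-d-1)` and `(dx, (p-d)x)`. -/
noncomputable def Mmat (p d : ℕ) : Matrix (Fin 2) (Fin 2) (Polynomial ℤ) :=
  !![Polynomial.C ((d : ℤ) + 1), Polynomial.C ((p : ℤ) - d - 1);
     Polynomial.C (d : ℤ) * Polynomial.X, Polynomial.C ((p : ℤ) - d) * Polynomial.X]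

open Polynomial in
theorem block_sum (a : ℕ) (ha : 0 < a) (q : ℕ) (hq : q ≤ a) (n : ℕ) :
    ∀ φ : ℕ → ℕ → ℤ[X], ∑ m ∈ range (a * n + q), φ (m / a) ((a * n + q - 1 - m) / a) =
      (q : ℤ[X]) * ∑ m ∈ range (n + 1), φ m (n - m) +
      ((a : ℤ[X]) - q) * ∑ m ∈ range n, φ m (n - 1 - m) := by
  induction n with
  | zero =>
    intro φ
    have : ∀ m ∈ range (a * 0 + q), φ (m / a) ((a * 0 + q - 1 - m) / a) = φ 0 0 := by
      intro m hm
      rw [mem_range] at hm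
      rw [Nat.div_eq_of_lt (by omega), Nat.div_eq_of_lt (by omega)]
    rw [Finset.sum_congr rfl this]
    simp
  | succ n ih =>
    intro φ
    have e : a * (n + 1) + q = q + (a - q) + (a * n + q) := by
      rw [Nat.mul_succ]; omega
    rw [e, Finset.sum_range_add, Finset.sum_range_add]
    have h1 : ∀ m ∈ range q, φ (m / a) ((q + (a - q) + (a * n + q) - 1 - m) / a) = φ 0 (n + 1) := by
      intro m hm
      rw [mem_range] at hm
      rw [Nat.div_eq_of_lt (by omega)]
      congr 1
      rw [show q + (a - q) + (a * n + q) - 1 - m = (q - 1 - m) + a * (n + 1) by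
        rw [Nat.mul_succ]; omega, Nat.add_mul_div_left _ _ ha, Nat.div_eq_of_lt (by omega)]
      omega
    have h2 : ∀ m ∈ range (a - q),
        φ ((q + m) / a) ((q + (a - q) + (a * n + q) - 1 - (q + m)) / a) = φ 0 n := by
      intro m hm
      rw [mem_range] at hm
      rw [Nat.div_eq_of_lt (by omega)]
      congr 1
      rw [show q + (a - q) + (a * n + q) - 1 - (q + m) = (a - 1 - m) + a * n by
        omega, Nat.add_mul_div_left _ _ ha, Nat.div_eq_of_lt (by omega)]
      omega
    have h3 : ∀ m ∈ range (a * n + q),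
        φ ((q + (a - q) + m) / a)
          ((q + (a - q) + (a * n + q) - 1 - (q + (a - q) + m)) / a) =
        (fun i j => φ (i + 1) j) (m / a) ((a * n + q - 1 - m) / a) := by
      intro m hm
      rw [mem_range] at hm
      have e1 : q + (a - q) + m = m + a := by omega
      have e2 : q + (a - q) + (a * n + q) - 1 - (m + a) = a * n + q - 1 - m := by omega
      rw [e1, e2, Nat.add_div_right _ ha]
    rw [Finset.sum_congr rfl h1, Finset.sum_congr rfl h2, Finset.sum_congr rfl h3, ih (fun i j => φ (i + 1) j)]
    rw [Finset.sum_range_succ' _ (n + 1), Finset.sum_range_succ' (fun m => φ m (n + 1 - 1 - m)) n]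
    have e5 : ∑ k ∈ range n, φ (k + 1) (n + 1 - 1 - (k + 1)) =
        ∑ k ∈ range n, φ (k + 1) (n - 1 - k) :=
      Finset.sum_congr rfl fun k _ => by congr 1; omega
    have e6 : ∑ k ∈ range (n + 1), φ (k + 1) (n + 1 - (k + 1)) =
        ∑ k ∈ range (n + 1), φ (k + 1) (n - k) :=
      Finset.sum_congr rfl fun k _ => by congr 1; omega
    rw [e5, e6]
    simp only [sum_const, card_range, nsmul_eq_mul, Nat.cast_sub hq, Nat.add_sub_cancel,
      Nat.sub_zero]
    ring

theorem rank_dvd {Cs : ℕ → ℤ} (hC : IsStrongDivSeq Cs) {m a : ℕ} (h : IsRank Cs m a)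
    {j : ℕ} (hj : 1 ≤ j) : (m : ℤ) ∣ Cs j ↔ a ∣ j := by
  obtain ⟨h1, h2, h3⟩ := h
  have hg := hC.2 a j h1 hj
  constructor
  · intro hd
    have h4 : m ∣ Int.gcd (Cs j) (Cs a) := Int.dvd_gcd hd h2
    rw [hg] at h4
    have hpos : 0 < Nat.gcd j a := Nat.gcd_pos_of_pos_left _ hj
    have h5 := h3 _ hpos (Int.natCast_dvd.2 h4)
    have h6 : Nat.gcd j a = a := le_antisymm (Nat.le_of_dvd h1 (Nat.gcd_dvd_right _ _)) h5
    exact h6 ▸ Nat.gcd_dvd_left j a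
  · intro hd
    rw [Nat.gcd_eq_right hd] at hg
    refine h2.trans ?_
    rw [← Int.natAbs_dvd, ← hg]
    exact Int.gcd_dvd_left ..

theorem val_Cs {Cs : ℕ → ℤ} {p : ℕ} [Fact p.Prime] {α : ℕ → ℕ} {s : ℕ}
    (hC : IsStrongDivSeq Cs) (hid : IdealPrime Cs p α s) {k : ℕ} (hk : 1 ≤ k) :
    padicValInt p (Cs (α 1 * k)) = s + padicValNat p k := by
  obtain ⟨hs, hr, hlo, hhi⟩ := hid
  have ha : 0 < α 1 := (hr 1 le_rfl).1
  have hj : 1 ≤ α 1 * k := Nat.mul_pos ha hk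
  have hA : ∀ v, α (s + v) = α 1 * p ^ v := by
    intro v
    rcases Nat.eq_zero_or_pos v with rfl | hv
    · simp [hlo s hs le_rfl]
    · rw [hhi _ (by omega), Nat.add_sub_cancel_left, mul_comm]
  have key : ∀ v, (p : ℤ) ^ (s + v) ∣ Cs (α 1 * k) ↔ v ≤ padicValNat p k := by
    intro v
    have := rank_dvd hC (hr (s + v) (by omega)) hj
    push_cast at this
    rw [this, hA, Nat.mul_dvd_mul_iff_left ha, padicValNat_dvd_iff_le (by omega)]
  have h0 : Cs (α 1 * k) ≠ 0 := hC.1 _ hj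
  have h1 := (key (padicValNat p k)).2 le_rfl
  have h2 := mt (key (padicValNat p k + 1)).1 (by omega)
  rw [padicValInt_dvd_iff] at h1 h2
  simp only [h0, false_or] at h1 h2
  omega

theorem val_Cs_zero {Cs : ℕ → ℤ} {p : ℕ} {α : ℕ → ℕ} {s : ℕ}
    (hC : IsStrongDivSeq Cs) (hid : IdealPrime Cs p α s) {j : ℕ} (hj : 1 ≤ j) (h : ¬ α 1 ∣ j) :
    padicValInt p (Cs j) = 0 := by
  obtain ⟨hs, hr, hlo, hhi⟩ := hid
  have := rank_dvd hC (hr 1 le_rfl) hj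
  rw [pow_one] at this
  exact padicValInt.eq_zero_of_not_dvd (fun hd => h (this.1 hd))

theorem Corial_ne {Cs : ℕ → ℤ} (hC : IsStrongDivSeq Cs) (n : ℕ) : Corial Cs n ≠ 0 := by
  induction n with
  | zero => simp [Corial]
  | succ n ih => exact mul_ne_zero ih (hC.1 _ (by omega))

theorem val_Corial {Cs : ℕ → ℤ} {p : ℕ} [Fact p.Prime] {α : ℕ → ℕ} {s : ℕ}
    (hC : IsStrongDivSeq Cs) (hid : IdealPrime Cs p α s) (N : ℕ) :
    padicValInt p (Corial Cs N) = s * (N / α 1) + padicValNat p (N / α 1).factorial := by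
  induction N with
  | zero => simp [Corial]
  | succ N ih =>
    rw [Corial, padicValInt.mul (Corial_ne hC N) (hC.1 _ (by omega)), ih, Nat.succ_div]
    split_ifs with h
    · have e : N + 1 = α 1 * (N / α 1 + 1) := by
        have := Nat.div_mul_cancel h
        rw [Nat.succ_div_of_dvd h] at this
        linarith
      rw [show Cs (N + 1) = Cs (α 1 * (N / α 1 + 1)) from congrArg Cs e,
        val_Cs hC hid (Nat.succ_pos _), Nat.factorial_succ,
        padicValNat.mul (Nat.succ_ne_zero _) (Nat.factorial_ne_zero _)]
      ring
    · rw [val_Cs_zero hC hid (by omega) h]; simp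

noncomputable def Apoly (p n : ℕ) : Polynomial ℤ := ∑ m ∈ range (n + 1),
  Polynomial.X ^ (padicValNat p n.factorial -
    (padicValNat p m.factorial + padicValNat p (n - m).factorial))

noncomputable def Bpoly (p n : ℕ) : Polynomial ℤ := ∑ m ∈ range n,
  Polynomial.X ^ (padicValNat p n.factorial -
    (padicValNat p m.factorial + padicValNat p (n - 1 - m).factorial))

theorem val_fact_add {p : ℕ} [Fact p.Prime] (i j n : ℕ) (h : i + j ≤ n) :
    padicValNat p i.factorial + padicValNat p j.factorial ≤ padicValNat p n.factorial := by
  rw [← padicValNat.mul (Nat.factorial_ne_zero _) (Nat.factorial_ne_zero _)]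
  refine (padicValNat_dvd_iff_le (Nat.factorial_ne_zero _)).1 ?_
  exact pow_padicValNat_dvd.trans
    ((Nat.factorial_mul_factorial_dvd_factorial_add i j).trans (Nat.factorial_dvd_factorial h))

theorem key_sum {p : ℕ} [Fact p.Prime] (a : ℕ) (ha : 0 < a) (q : ℕ) (hq : q ≤ a) (n t : ℕ)
    (G : ℕ → ℕ) (hG : ∀ m, G m = t * (m / a) + padicValNat p (m / a).factorial) :
    ∑ m ∈ range (a * n + q), (Polynomial.X : Polynomial ℤ) ^
        (t * n + padicValNat p n.factorial - (G m + G (a * n + q - 1 - m))) =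
      (q : Polynomial ℤ) * Apoly p n +
      ((a : Polynomial ℤ) - (q : Polynomial ℤ)) * (Polynomial.X ^ t * Bpoly p n) := by
  have := block_sum a ha q hq n (fun i j => Polynomial.X ^
    (t * n + padicValNat p n.factorial - ((t * i + padicValNat p i.factorial) +
      (t * j + padicValNat p j.factorial))))
  simp only [hG]
  rw [this, Apoly, Bpoly, Finset.mul_sum (range n) _ (Polynomial.X ^ t)]
  congr 2
  · refine Finset.sum_congr rfl fun m hm => ?_
    rw [mem_range] at hm
    congr 1
    obtain ⟨d, rfl⟩ : ∃ d, n = m + d := ⟨n - m, by omega⟩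
    rw [Nat.add_sub_cancel_left, Nat.mul_add]
    omega
  · refine Finset.sum_congr rfl fun m hm => ?_
    rw [mem_range] at hm
    rw [← pow_add]
    congr 1
    obtain ⟨d, rfl⟩ : ∃ d, n = m + d + 1 := ⟨n - m - 1, by omega⟩
    have := val_fact_add (p := p) m d (m + d + 1) (by omega)
    rw [show m + d + 1 - 1 - m = d by omega, Nat.mul_add, Nat.mul_add]
    omega

theorem val_fact_block {p : ℕ} [hp : Fact p.Prime] (m : ℕ) :
    padicValNat p m.factorial = 1 * (m / p) + padicValNat p (m / p).factorial := by
  conv_lhs => rw [← Nat.div_add_mod m p]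
  rw [padicValNat_factorial_mul_add _ (Nat.mod_lt _ hp.out.pos), padicValNat_factorial_mul]
  ring

theorem Apoly_rec {p : ℕ} [hp : Fact p.Prime] (n d : ℕ) (hd : d < p) :
    Apoly p (p * n + d) = ((d : Polynomial ℤ) + 1) * Apoly p n +
      ((p : Polynomial ℤ) - (d : Polynomial ℤ) - 1) * (Polynomial.X * Bpoly p n) := by
  have := key_sum (p := p) p hp.out.pos (d + 1) hd n 1 _ val_fact_block
  rw [Apoly]
  have e : padicValNat p (p * n + d).factorial = 1 * n + padicValNat p n.factorial := by
    rw [val_fact_block, Nat.mul_add_div hp.out.pos, Nat.div_eq_of_lt hd, add_zero]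
  rw [e]
  rw [show p * n + (d + 1) - 1 = p * n + d by omega] at this
  refine this.trans ?_
  push_cast
  ring

theorem Bpoly_rec {p : ℕ} [hp : Fact p.Prime] (n d : ℕ) (hd : d < p) :
    Bpoly p (p * n + d) = (d : Polynomial ℤ) * Apoly p n +
      ((p : Polynomial ℤ) - (d : Polynomial ℤ)) * (Polynomial.X * Bpoly p n) := by
  have := key_sum (p := p) p hp.out.pos d hd.le n 1 _ val_fact_block
  rw [Bpoly]
  have e : padicValNat p (p * n + d).factorial = 1 * n + padicValNat p n.factorial := by
    rw [val_fact_block, Nat.mul_add_div hp.out.pos, Nat.div_eq_of_lt hd, add_zero]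
  rw [e]
  convert this using 1
  ring

theorem digits_prod {p : ℕ} [hp : Fact p.Prime] (n : ℕ) :
    ((Nat.digits p n).map (Mmat p)).prod * (!![1; 0] : Matrix (Fin 2) (Fin 1) (Polynomial ℤ)) =
      !![Apoly p n; Polynomial.X * Bpoly p n] := by
  induction n using Nat.strong_induction_on with
  | _ n ih =>
    rcases Nat.eq_zero_or_pos n with rfl | hn
    · simp [Apoly, Bpoly]
    · rw [Nat.digits_def' hp.out.one_lt hn, List.map_cons, List.prod_cons, Matrix.mul_assoc,
        ih _ (Nat.div_lt_self hn hp.out.one_lt)]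
      have hd := Nat.mod_lt n hp.out.pos
      have hA := Apoly_rec (p := p) (n / p) (n % p) hd
      have hB := Bpoly_rec (p := p) (n / p) (n % p) hd
      rw [Nat.div_add_mod] at hA hB
      rw [hA, hB, Mmat]
      generalize n % p = d
      refine Matrix.ext fun i j => ?_
      fin_cases i <;> fin_cases j <;> simp [Matrix.mul_apply, Fin.sum_univ_two] <;> ring

theorem stmt0 (Cs : ℕ → ℤ) (p : ℕ) (hp : p.Prime) (α : ℕ → ℕ) (s : ℕ)
    (hC : IsStrongDivSeq Cs) (hid : IdealPrime Cs p α s)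
    (n r : ℕ) (hr : r < α 1) :
    Tpoly p Cs (α 1 * n + r) =
      (!![Polynomial.C ((r : ℤ) + 1),
          Polynomial.C ((α 1 : ℤ) - r - 1) * Polynomial.X ^ (s - 1)] *
        ((Nat.digits p n).map (Mmat p)).prod * (!![1; 0] : Matrix (Fin 2) (Fin 1) (Polynomial ℤ))) 0 0 := by
  have : Fact p.Prime := ⟨hp⟩
  have ha : 0 < α 1 := by omega
  rw [Matrix.mul_assoc, digits_prod]
  have hk := key_sum (p := p) (α 1) ha (r + 1) hr n s _ (val_Corial hC hid)
  have e : padicValInt p (Corial Cs (α 1 * n + r)) = s * n + padicValNat p n.factorial := by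
    rw [val_Corial hC hid, Nat.mul_add_div ha, Nat.div_eq_of_lt hr, add_zero]
  have hT : Tpoly p Cs (α 1 * n + r) = ∑ m ∈ range (α 1 * n + (r + 1)),
      (Polynomial.X : Polynomial ℤ) ^ (s * n + padicValNat p n.factorial -
        (padicValInt p (Corial Cs m) +
          padicValInt p (Corial Cs (α 1 * n + (r + 1) - 1 - m)))) := by
    rw [Tpoly]
    refine Finset.sum_congr rfl fun m _ => ?_
    congr 1
    rw [nuCnomial, e, show α 1 * n + (r + 1) - 1 = α 1 * n + r by omega]
    omega
  rw [hT, hk]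
  obtain ⟨s', rfl⟩ : ∃ s', s = s' + 1 := ⟨s - 1, by have := hid.1; omega⟩
  simp [Matrix.mul_apply, Fin.sum_univ_two, pow_succ]
  ring
end

section
/- Let C be a strong divisibility sequence, let p be an ideal prime for C with parameter s = s(p), and let k ≥ 2. For any n ≥ 0, write n = α(p)·n' + r with n' ≥ 0 and 0 ≤ r < α(p). Then T_{p,k,C}(n, x) = Σ_{λ=0}^{k−1} u_{p,k,C,λ}(r) · T_{p,k,λ}(n', x), where u_{p,k,C,λ}(r) = x^{(s−1)λ} · Σ_{j=0}^{λ} (−1)^j · C(k,j) · C(r + (λ−j)·α(p) + k − 1, k−1) (C(a,b) denoting the ordinary binomial coefficient). -/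
open Finset

/-- The `p`-adic valuation of the `C`-multinomial coefficient,
defined as `ν_p(n!_C) - ∑_i ν_p(m_i!_C)` (an integer). -/
def nuCmulti (p : ℕ) (Cs : ℕ → ℤ) {k : ℕ} (n : ℕ) (m : Fin k → ℕ) : ℤ :=
  (padicValInt p (Corial Cs n) : ℤ) - ∑ i, (padicValInt p (Corial Cs (m i)) : ℤ)

/-- `T_{p,k,C}(n, x)`: the generating polynomial counting `C`-multinomial coefficients
with `k` parts and top index `n` by their `p`-adic valuations. -/
noncomputable def TmultiC (p k : ℕ) (Cs : ℕ → ℤ) (n : ℕ) : Polynomial ℤ :=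
  ∑ m ∈ Finset.Nat.antidiagonalTuple k n, Polynomial.X ^ (nuCmulti p Cs n m).toNat

/-- `T_{p,k}(n, x)`: the generating polynomial counting ordinary multinomial coefficients
with `k` parts and top index `n` by their `p`-adic valuations. -/
noncomputable def TmultiOrd (p k n : ℕ) : Polynomial ℤ :=
  ∑ m ∈ Finset.Nat.antidiagonalTuple k n,
    Polynomial.X ^ (padicValNat p (Nat.multinomial Finset.univ m))

/-- `T_{p,k,λ}(n, x)`: `0` if `n < λ`, and
`x^(ν_p(n!/(n-λ)!) + λ) · T_{p,k}(n - λ, x)` otherwise. -/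
noncomputable def TmultiLam (p k lam n : ℕ) : Polynomial ℤ :=
  if n < lam then 0
  else Polynomial.X ^ ((padicValNat p (Nat.factorial n)
      - padicValNat p (Nat.factorial (n - lam))) + lam) * TmultiOrd p k (n - lam)

/-- The ideal-prime initial vector entry
`u_{p,k,C,λ}(r) = x^{(s-1)λ} · ∑_{j=0}^{λ} (-1)^j C(k,j) C(r + (λ-j)α + k - 1, k - 1)`. -/
noncomputable def uIdealMulti (αp s k lam r : ℕ) : Polynomial ℤ :=
  Polynomial.X ^ ((s - 1) * lam) *
    Polynomial.C (∑ j ∈ Finset.range (lam + 1),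
      (-1 : ℤ) ^ j * (Nat.choose k j : ℤ) *
        (Nat.choose (r + (lam - j) * αp + k - 1) (k - 1) : ℤ))

-- HELPERS
theorem aux_dvd (Cs : ℕ → ℤ) (p : ℕ) (α : ℕ → ℕ) (s : ℕ)
    (hC : IsStrongDivSeq Cs) (hid : IdealPrime Cs p α s) (j : ℕ) (hj : 1 ≤ j) (n : ℕ) (hn : 1 ≤ n) :
    p ^ j ∣ (Cs n).natAbs ↔ α j ∣ n := by
  obtain ⟨h1, hd, hmin⟩ := hid.2.1 j hj
  have hg := hC.2 (α j) n h1 hn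
  have hd' : p ^ j ∣ (Cs (α j)).natAbs := Int.natCast_dvd.mp hd
  constructor
  · intro h
    have h2 : p ^ j ∣ (Cs (Nat.gcd n (α j))).natAbs := by
      rw [← hg]; exact Nat.dvd_gcd h hd'
    have hpos : 1 ≤ Nat.gcd n (α j) := Nat.gcd_pos_of_pos_left _ hn
    have h3 := hmin _ hpos (Int.natCast_dvd.mpr h2)
    have h4 : Nat.gcd n (α j) = α j :=
      le_antisymm (Nat.le_of_dvd h1 (Nat.gcd_dvd_right _ _)) h3
    rw [← h4]; exact Nat.gcd_dvd_left _ _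
  · intro h
    rw [Nat.gcd_eq_right h] at hg
    rw [← hg] at hd'
    exact hd'.trans (Nat.gcd_dvd_left _ _)

theorem aux_val_mul (Cs : ℕ → ℤ) (p : ℕ) (hp : p.Prime) (α : ℕ → ℕ) (s : ℕ)
    (hC : IsStrongDivSeq Cs) (hid : IdealPrime Cs p α s) (q : ℕ) (hq : 1 ≤ q) :
    padicValInt p (Cs (α 1 * q)) = s + padicValNat p q := by
  have := Fact.mk hp
  have h1 : 1 ≤ α 1 := (hid.2.1 1 le_rfl).1
  have hn : 1 ≤ α 1 * q := Nat.mul_pos h1 hq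
  have hne : (Cs (α 1 * q)).natAbs ≠ 0 := Int.natAbs_ne_zero.mpr (hC.1 _ hn)
  have key : ∀ j, j ≤ padicValInt p (Cs (α 1 * q)) ↔ j ≤ s + padicValNat p q := by
    intro j
    unfold padicValInt
    rcases Nat.eq_zero_or_pos j with rfl | hj
    · simp
    rw [← padicValNat_dvd_iff_le hne, aux_dvd Cs p α s hC hid j hj _ hn]
    by_cases hjs : j ≤ s
    · rw [hid.2.2.1 j hj hjs]
      simp; omega
    · push Not at hjs
      rw [hid.2.2.2 j hjs, mul_comm (p ^ _), Nat.mul_dvd_mul_iff_left h1,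
        padicValNat_dvd_iff_le (by omega)]
      omega
  exact le_antisymm ((key _).1 le_rfl) ((key _).2 le_rfl)

theorem aux_val_not (Cs : ℕ → ℤ) (p : ℕ) (hp : p.Prime) (α : ℕ → ℕ) (s : ℕ)
    (hC : IsStrongDivSeq Cs) (hid : IdealPrime Cs p α s) (n : ℕ) (hn : 1 ≤ n) (h : ¬ α 1 ∣ n) :
    padicValInt p (Cs n) = 0 := by
  unfold padicValInt
  apply padicValNat.eq_zero_of_not_dvd
  rw [← aux_dvd Cs p α s hC hid 1 le_rfl n hn, pow_one] at h
  exact h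

theorem aux_corial_ne (Cs : ℕ → ℤ) (hC : IsStrongDivSeq Cs) (n : ℕ) : Corial Cs n ≠ 0 := by
  induction n with
  | zero => simp [Corial]
  | succ n ih => exact mul_ne_zero ih (hC.1 _ (by omega))

theorem aux_corial (Cs : ℕ → ℤ) (p : ℕ) (hp : p.Prime) (α : ℕ → ℕ) (s : ℕ)
    (hC : IsStrongDivSeq Cs) (hid : IdealPrime Cs p α s) (n : ℕ) :
    padicValInt p (Corial Cs n) = s * (n / α 1) + padicValNat p (Nat.factorial (n / α 1)) := by
  have := Fact.mk hp
  have h1 : 1 ≤ α 1 := (hid.2.1 1 le_rfl).1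
  induction n with
  | zero => simp [Corial]
  | succ n ih =>
    rw [Corial, padicValInt.mul (aux_corial_ne Cs hC n) (hC.1 _ (by omega)), ih, Nat.succ_div]
    split_ifs with h
    · have e : n + 1 = α 1 * (n / α 1 + 1) := by
        obtain ⟨c, hc⟩ := h
        have := Nat.succ_div (a := n) (b := α 1)
        rw [if_pos ⟨c, hc⟩] at this
        rw [← this, hc, Nat.mul_div_cancel_left _ h1]
      rw [e, aux_val_mul Cs p hp α s hC hid _ (Nat.succ_pos _), Nat.factorial_succ,
        padicValNat.mul (Nat.succ_ne_zero _) (Nat.factorial_ne_zero _)]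
      ring
    · rw [aux_val_not Cs p hp α s hC hid _ (by omega) h]; simp

theorem aux_padic_prod (p : ℕ) (hp : p.Prime) {ι : Type*} (t : Finset ι) (f : ι → ℕ)
    (hf : ∀ i ∈ t, f i ≠ 0) : padicValNat p (∏ i ∈ t, f i) = ∑ i ∈ t, padicValNat p (f i) := by
  classical
  have := Fact.mk hp
  induction t using Finset.induction_on with
  | empty => simp
  | insert a t ha ih =>
    rw [Finset.prod_insert ha, Finset.sum_insert ha, padicValNat.mul (hf _ (by simp))
      (Finset.prod_ne_zero_iff.mpr fun i hi => hf i (by simp [hi])),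
      ih fun i hi => hf i (by simp [hi])]

theorem aux_multi (p : ℕ) (hp : p.Prime) (k N : ℕ) (q : Fin k → ℕ) (hq : ∑ i, q i = N) :
    padicValNat p (Nat.factorial N) =
      ∑ i, padicValNat p (Nat.factorial (q i)) + padicValNat p (Nat.multinomial Finset.univ q) := by
  have := Fact.mk hp
  rw [← hq, ← Nat.multinomial_spec, padicValNat.mul
    (Finset.prod_ne_zero_iff.mpr fun i _ => Nat.factorial_ne_zero _)
    (Nat.multinomial_pos _ _).ne', aux_padic_prod p hp _ _ fun i _ => Nat.factorial_ne_zero _]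

/-- Restricted tuples. -/
def auxR (k a N : ℕ) : Finset (Fin k → ℕ) :=
  (Fintype.piFinset fun _ : Fin k => Finset.range a).filter fun f => ∑ i, f i = N

theorem aux_card (k a N : ℕ) : ((auxR k a N).card : ℤ) =
    PowerSeries.coeff N ((∑ i ∈ Finset.range a, (PowerSeries.X : PowerSeries ℤ) ^ i) ^ k) := by
  have : (∑ i ∈ Finset.range a, (PowerSeries.X : PowerSeries ℤ) ^ i) ^ k =
      ∏ _i : Fin k, (∑ i ∈ Finset.range a, (PowerSeries.X : PowerSeries ℤ) ^ i) := by simp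
  rw [this, Finset.prod_univ_sum, map_sum, auxR, Finset.card_filter]
  push_cast
  refine Finset.sum_congr rfl fun f _ => ?_
  rw [Finset.prod_pow_eq_pow_sum, PowerSeries.coeff_X_pow]
  simp [eq_comm]

theorem aux_count (k a r lam : ℕ) (hk : 1 ≤ k) (hr : r < a) :
    ((auxR k a (r + lam * a)).card : ℤ) = ∑ j ∈ Finset.range (lam + 1),
      (-1 : ℤ) ^ j * (Nat.choose k j : ℤ) *
        (Nat.choose (r + (lam - j) * a + k - 1) (k - 1) : ℤ) := by
  obtain ⟨d, rfl⟩ : ∃ d, k = d + 1 := ⟨k - 1, by omega⟩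
  have hgeo : (∑ i ∈ Finset.range a, (PowerSeries.X : PowerSeries ℤ) ^ i) =
      (1 - PowerSeries.X ^ a) * PowerSeries.mk 1 := by
    have h1 := mul_neg_geom_sum (PowerSeries.X : PowerSeries ℤ) a
    have h2 := PowerSeries.mk_one_mul_one_sub_eq_one ℤ
    rw [← h1]
    linear_combination (-(∑ i ∈ Finset.range a, (PowerSeries.X : PowerSeries ℤ) ^ i)) * h2
  rw [aux_card, hgeo, mul_pow, PowerSeries.mk_one_pow_eq_mk_choose_add, sub_eq_neg_add, add_pow,
    Finset.sum_mul, map_sum]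
  have hterm : ∀ j, PowerSeries.coeff (r + lam * a) ((-(PowerSeries.X : PowerSeries ℤ) ^ a) ^ j *
      1 ^ (d + 1 - j) * ((d + 1).choose j : PowerSeries ℤ) *
        PowerSeries.mk fun n => ((d + n).choose d : ℤ)) =
      if j ≤ lam then (-1 : ℤ) ^ j * (Nat.choose (d + 1) j : ℤ) *
        (Nat.choose (r + (lam - j) * a + (d + 1) - 1) (d + 1 - 1) : ℤ) else 0 := by
    intro j
    have e : (-(PowerSeries.X : PowerSeries ℤ) ^ a) ^ j *
      1 ^ (d + 1 - j) * ((d + 1).choose j : PowerSeries ℤ) *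
        (PowerSeries.mk fun n => ((d + n).choose d : ℤ)) =
        PowerSeries.C ((-1 : ℤ) ^ j * (Nat.choose (d + 1) j : ℤ)) *
        (PowerSeries.X ^ (a * j) * PowerSeries.mk fun n => ((d + n).choose d : ℤ)) := by
      rw [neg_pow, ← pow_mul]
      simp only [map_mul, map_pow, map_neg, map_one, map_natCast, one_pow]
      ring
    rw [e, PowerSeries.coeff_C_mul, PowerSeries.coeff_X_pow_mul']
    by_cases hj : j ≤ lam
    · obtain ⟨c, rfl⟩ := Nat.exists_eq_add_of_le hj
      have e1 : r + (j + c) * a - a * j = r + c * a := by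
        rw [add_mul, mul_comm a j]; omega
      have e2 : a * j ≤ r + (j + c) * a := by nlinarith
      rw [if_pos e2, if_pos hj, e1, PowerSeries.coeff_mk]
      congr 3
      · rw [Nat.add_sub_cancel_left]; omega
    · rw [if_neg hj, if_neg, mul_zero]
      push Not at hj ⊢
      nlinarith
  simp only [hterm]
  rw [← Finset.sum_filter]
  refine Finset.sum_subset_zero_on_sdiff ?_ ?_ (fun _ _ => rfl)
  · intro j hj
    simp only [Finset.mem_filter, Finset.mem_range] at hj ⊢
    omega
  · intro j hj
    simp only [Finset.mem_sdiff, Finset.mem_range, Finset.mem_filter, not_and] at hj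
    rw [Nat.choose_eq_zero_of_lt (by omega : d + 1 < j)]
    simp

theorem aux_val (Cs : ℕ → ℤ) (p : ℕ) (hp : p.Prime) (α : ℕ → ℕ) (s : ℕ)
    (hC : IsStrongDivSeq Cs) (hid : IdealPrime Cs p α s) (k n' r lam : ℕ) (hr : r < α 1)
    (hl : lam ≤ n') (m : Fin k → ℕ) (hm : ∑ i, m i / α 1 = n' - lam) :
    (nuCmulti p Cs (α 1 * n' + r) m).toNat = (s - 1) * lam +
      ((padicValNat p (Nat.factorial n') - padicValNat p (Nat.factorial (n' - lam))) + lam) +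
      padicValNat p (Nat.multinomial Finset.univ fun i => m i / α 1) := by
  have := Fact.mk hp
  have hs := hid.1
  have hdiv : (α 1 * n' + r) / α 1 = n' := by
    rw [Nat.mul_add_div (by omega), Nat.div_eq_of_lt hr, add_zero]
  have hle : padicValNat p (Nat.factorial (n' - lam)) ≤ padicValNat p (Nat.factorial n') := by
    rw [← padicValNat_dvd_iff_le (Nat.factorial_ne_zero _)]
    exact pow_padicValNat_dvd.trans (Nat.factorial_dvd_factorial (by omega))
  have hmul := aux_multi p hp k _ (fun i => m i / α 1) hm
  have hsum : (∑ i, (padicValInt p (Corial Cs (m i)) : ℤ)) = s * (n' - lam : ℕ) +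
      (∑ i, padicValNat p (Nat.factorial (m i / α 1)) : ℕ) := by
    simp only [aux_corial Cs p hp α s hC hid]
    rw [← hm]
    push_cast
    rw [Finset.sum_add_distrib, Finset.mul_sum]
  rw [nuCmulti, hsum, aux_corial Cs p hp α s hC hid, hdiv]
  obtain ⟨c, rfl⟩ := Nat.exists_eq_add_of_le hl
  obtain ⟨t, rfl⟩ := Nat.exists_eq_add_of_le hs
  simp only [Nat.add_sub_cancel_left] at *
  have : (((1 + t) * (lam + c) + padicValNat p (lam + c).factorial : ℕ) : ℤ) -
      ((1 + t : ℕ) * c + (∑ i, padicValNat p (m i / α 1).factorial : ℕ)) =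
      ((t * lam + (padicValNat p (lam + c).factorial - padicValNat p c.factorial + lam) +
      padicValNat p (Nat.multinomial univ fun i => m i / α 1) : ℕ) : ℤ) := by
    have h2 : (padicValNat p c.factorial : ℤ) = _ := congrArg Nat.cast hmul
    push_cast [Nat.cast_sub hle] at h2 ⊢
    linear_combination h2
  rw [this, Int.toNat_natCast]

theorem stmt2 (Cs : ℕ → ℤ) (p : ℕ) (hp : p.Prime) (α : ℕ → ℕ) (s : ℕ)
    (hC : IsStrongDivSeq Cs) (hid : IdealPrime Cs p α s)
    (k : ℕ) (hk : 2 ≤ k) (n' r : ℕ) (hr : r < α 1) :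
    TmultiC p k Cs (α 1 * n' + r) =
      ∑ lam ∈ Finset.range k, uIdealMulti (α 1) s k lam r * TmultiLam p k lam n' := by
  have ha : 0 < α 1 := by omega
  set a := α 1 with hadef
  have hdm : ∀ m : Fin k → ℕ, ∑ i, m i = a * ∑ i, m i / a + ∑ i, m i % a := by
    intro m
    rw [Finset.mul_sum, ← Finset.sum_add_distrib]
    exact Finset.sum_congr rfl fun i _ => (Nat.div_add_mod _ _).symm
  -- structure of tuples
  have hst : ∀ m ∈ Finset.Nat.antidiagonalTuple k (a * n' + r),
      ∑ i, m i % a = r + (∑ i, m i % a) / a * a ∧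
      ∑ i, m i / a + (∑ i, m i % a) / a = n' := by
    intro m hm
    rw [Finset.Nat.mem_antidiagonalTuple] at hm
    have h := hdm m
    rw [hm] at h
    have hmod : (∑ i, m i % a) % a = r := by
      have := congrArg (· % a) h
      simp only [Nat.mul_add_mod] at this
      rw [← this, Nat.mod_eq_of_lt hr]
    have h2 := Nat.div_add_mod (∑ i, m i % a) a
    rw [hmod] at h2
    refine ⟨by rw [mul_comm]; omega, ?_⟩
    have : a * n' = a * (∑ i, m i / a + (∑ i, m i % a) / a) := by rw [mul_add]; omega
    exact (Nat.eq_of_mul_eq_mul_left ha this).symm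
  have hmaps : ∀ m ∈ Finset.Nat.antidiagonalTuple k (a * n' + r),
      (∑ i, m i % a) / a ∈ Finset.range k := by
    intro m _
    rw [Finset.mem_range, Nat.div_lt_iff_lt_mul ha]
    calc ∑ i, m i % a < ∑ i : Fin k, a := by
          apply Finset.sum_lt_sum_of_nonempty
          · exact ⟨⟨0, by omega⟩, Finset.mem_univ _⟩
          · intro i _; exact Nat.mod_lt _ ha
      _ = k * a := by simp
  rw [TmultiC, ← Finset.sum_fiberwise_of_maps_to hmaps]
  refine Finset.sum_congr rfl fun lam hlam => ?_
  rw [TmultiLam]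
  split_ifs with hlt
  · rw [mul_zero]
    apply Finset.sum_eq_zero
    intro m hm
    rw [Finset.mem_filter] at hm
    have := (hst m hm.1).2
    omega
  push Not at hlt
  have hbij : ∑ m ∈ Finset.Nat.antidiagonalTuple k (a * n' + r) with (∑ i, m i % a) / a = lam,
      (Polynomial.X : Polynomial ℤ) ^ (nuCmulti p Cs (a * n' + r) m).toNat =
      ∑ x ∈ auxR k a (r + lam * a) ×ˢ Finset.Nat.antidiagonalTuple k (n' - lam),
        (Polynomial.X : Polynomial ℤ) ^ ((s - 1) * lam +
          ((padicValNat p (Nat.factorial n') - padicValNat p (Nat.factorial (n' - lam))) + lam) +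
          padicValNat p (Nat.multinomial Finset.univ x.2)) := by
    refine Finset.sum_nbij' (fun m => (fun i => m i % a, fun i => m i / a))
      (fun x i => a * x.2 i + x.1 i) ?_ ?_ ?_ ?_ ?_
    · intro m hm
      rw [Finset.mem_filter] at hm
      obtain ⟨h1, h2⟩ := hst m hm.1
      rw [hm.2] at h1 h2
      simp only [Finset.mem_product, auxR, Finset.mem_filter, Fintype.mem_piFinset,
        Finset.mem_range, Finset.Nat.mem_antidiagonalTuple]
      exact ⟨⟨fun i => Nat.mod_lt _ ha, h1⟩, by omega⟩
    · rintro ⟨ρ, q⟩ hx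
      simp only [Finset.mem_product, auxR, Finset.mem_filter, Fintype.mem_piFinset,
        Finset.mem_range, Finset.Nat.mem_antidiagonalTuple] at hx ⊢
      obtain ⟨⟨h1, h2⟩, h3⟩ := hx
      have e : ∀ i, (a * q i + ρ i) % a = ρ i := fun i => by
        rw [Nat.mul_add_mod, Nat.mod_eq_of_lt (h1 i)]
      simp only [e]
      rw [Finset.sum_add_distrib, ← Finset.mul_sum, h2, h3]
      constructor
      · obtain ⟨c, rfl⟩ := Nat.exists_eq_add_of_le hlt
        rw [Nat.add_sub_cancel_left]; ring
      · rw [Nat.add_mul_div_right _ _ ha, Nat.div_eq_of_lt hr, zero_add]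
    · intro m _
      funext i
      exact Nat.div_add_mod _ _
    · rintro ⟨ρ, q⟩ hx
      simp only [Finset.mem_product, auxR, Finset.mem_filter, Fintype.mem_piFinset,
        Finset.mem_range, Finset.Nat.mem_antidiagonalTuple] at hx
      obtain ⟨⟨h1, h2⟩, h3⟩ := hx
      ext i
      · simp only []
        rw [Nat.mul_add_mod, Nat.mod_eq_of_lt (h1 i)]
      · simp only []
        rw [Nat.mul_add_div ha, Nat.div_eq_of_lt (h1 i), add_zero]
    · intro m hm
      rw [Finset.mem_filter] at hm
      obtain ⟨h1, h2⟩ := hst m hm.1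
      rw [hm.2] at h1 h2
      rw [aux_val Cs p hp α s hC hid k n' r lam hr hlt m (by rw [← hadef]; omega)]
  rw [hbij, Finset.sum_product]
  simp only []
  rw [Finset.sum_const, nsmul_eq_mul, uIdealMulti,
    ← aux_count k a r lam (by omega) hr, TmultiOrd]
  simp only [pow_add _ (_ + _) (padicValNat p (Nat.multinomial _ _)), ← Finset.mul_sum]
  simp only [map_natCast]
  rw [pow_add]
  ring
end

section
/- Let C be a strong divisibility sequence and let p be an ideal prime for C with parameter s = s(p), so that in particular α(p^j) = α(p) for 1 ≤ j ≤ s. Then for every 0 ≤ r < α(p), the entries of the acceptable-prime initial vector specialize as u_{p,C,0}(r) = r + 1 and u_{p,C,1}(r) = (α(p) − r − 1)·x^{s−1}; here for λ ∈ {0,1}, u_{p,C,λ}(r) = Σ x^{f_{p,C,λ}(r,r_1,r_2) − λ}, the sum over pairs (r_1, r_2) ∈ {0,1,…,α(p^s)−1}^2 with r_1 + r_2 = r + λ·α(p^s). -/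
open Finset

/-- `f_{p,C,λ}(r, r₁, r₂)` from the acceptable-prime initial vector. -/
def fCnom (α : ℕ → ℕ) (s lam r r1 r2 : ℕ) : ℤ :=
  (lam : ℤ) * ∑ j ∈ Finset.Icc 1 s, ((α s / α j : ℕ) : ℤ)
  + ∑ j ∈ Finset.Icc 1 s,
      (((r / α j : ℕ) : ℤ) - ((r1 / α j : ℕ) : ℤ) - ((r2 / α j : ℕ) : ℤ))

/-- `u_{p,C,λ}(r) = ∑ x ^ (f_{p,C,λ}(r,r₁,r₂) - λ)`, summed over pairs
`(r₁, r₂) ∈ {0, …, α(p^s) - 1}²` with `r₁ + r₂ = r + λ · α(p^s)`. -/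
noncomputable def uCnom (α : ℕ → ℕ) (s lam r : ℕ) : Polynomial ℤ :=
  ∑ q ∈ (Finset.range (α s) ×ˢ Finset.range (α s)).filter
      (fun q => q.1 + q.2 = r + lam * α s),
    Polynomial.X ^ (fCnom α s lam r q.1 q.2 - lam).toNat

theorem stmt16 (Cs : ℕ → ℤ) (p : ℕ) (hp : p.Prime) (α : ℕ → ℕ) (s : ℕ)
    (hC : IsStrongDivSeq Cs) (hid : IdealPrime Cs p α s)
    (r : ℕ) (hr : r < α 1) :
    uCnom α s 0 r = Polynomial.C ((r : ℤ) + 1) ∧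
    uCnom α s 1 r =
      Polynomial.C ((α 1 : ℤ) - r - 1) * Polynomial.X ^ (s - 1) := by
  obtain ⟨hs, -, hα, -⟩ := hid
  have hαs : α s = α 1 := hα s hs le_rfl
  have hpos : 0 < α 1 := by omega
  have hf : ∀ lam r1 r2 : ℕ, r1 < α 1 → r2 < α 1 →
      fCnom α s lam r r1 r2 = (lam : ℤ) * s := by
    intro lam r1 r2 h1 h2
    unfold fCnom
    have e1 : ∑ j ∈ Finset.Icc 1 s, ((α s / α j : ℕ) : ℤ) = s := by
      rw [Finset.sum_congr rfl (g := fun _ => (1 : ℤ))]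
      · simp
      · intro j hj
        rw [Finset.mem_Icc] at hj
        rw [hαs, hα j hj.1 hj.2, Nat.div_self hpos]
        rfl
    have e2 : ∑ j ∈ Finset.Icc 1 s,
        (((r / α j : ℕ) : ℤ) - ((r1 / α j : ℕ) : ℤ) - ((r2 / α j : ℕ) : ℤ)) = 0 := by
      apply Finset.sum_eq_zero
      intro j hj
      rw [Finset.mem_Icc] at hj
      rw [hα j hj.1 hj.2, Nat.div_eq_of_lt hr, Nat.div_eq_of_lt h1, Nat.div_eq_of_lt h2]
      simp
    rw [e1, e2, add_zero]
  have hu : ∀ lam : ℕ, uCnom α s lam r =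
      (((Finset.range (α 1) ×ˢ Finset.range (α 1)).filter
        (fun q => q.1 + q.2 = r + lam * α 1)).card : Polynomial ℤ) *
        Polynomial.X ^ ((lam : ℤ) * s - lam).toNat := by
    intro lam
    unfold uCnom
    rw [hαs, ← nsmul_eq_mul]
    apply Finset.sum_eq_card_nsmul
    intro q hq
    simp only [Finset.mem_filter, Finset.mem_product, Finset.mem_range] at hq
    rw [hf lam q.1 q.2 hq.1.1 hq.1.2]
  have c0 : ((Finset.range (α 1) ×ˢ Finset.range (α 1)).filter
        (fun q => q.1 + q.2 = r + 0 * α 1)).card = r + 1 := by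
    rw [← Finset.card_range (r + 1)]
    apply Finset.card_bij (fun q _ => q.1)
    · rintro ⟨a, b⟩ h
      simp only [Finset.mem_filter, Finset.mem_product, Finset.mem_range] at h ⊢
      omega
    · rintro ⟨a, b⟩ h ⟨c, d⟩ h' e
      simp only [Finset.mem_filter, Finset.mem_product, Finset.mem_range] at h h' e
      simp only [Prod.mk.injEq]
      omega
    · intro a h
      rw [Finset.mem_range] at h
      refine ⟨(a, r - a), ?_, rfl⟩
      simp only [Finset.mem_filter, Finset.mem_product, Finset.mem_range]
      omega
  have c1 : ((Finset.range (α 1) ×ˢ Finset.range (α 1)).filter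
        (fun q => q.1 + q.2 = r + 1 * α 1)).card = α 1 - (r + 1) := by
    rw [← Nat.card_Ico (r + 1) (α 1)]
    apply Finset.card_bij (fun q _ => q.1)
    · rintro ⟨a, b⟩ h
      simp only [Finset.mem_filter, Finset.mem_product, Finset.mem_range,
        Finset.mem_Ico] at h ⊢
      omega
    · rintro ⟨a, b⟩ h ⟨c, d⟩ h' e
      simp only [Finset.mem_filter, Finset.mem_product, Finset.mem_range] at h h' e
      simp only [Prod.mk.injEq]
      omega
    · intro a h
      rw [Finset.mem_Ico] at h
      refine ⟨(a, r + α 1 - a), ?_, rfl⟩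
      simp only [Finset.mem_filter, Finset.mem_product, Finset.mem_range]
      omega
  constructor
  · rw [hu 0, c0]
    simp
  · rw [hu 1, c1]
    have e : (((1 : ℕ) : ℤ) * s - ((1 : ℕ) : ℤ)).toNat = s - 1 := by omega
    have e' : (α 1 : ℤ) - r - 1 = ((α 1 - (r + 1) : ℕ) : ℤ) := by omega
    rw [e, e']
    simp
end
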